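/- arXiv:2107.07433 — 2 statements merged into one kernel-verified Lean document; each statement's English description precedes it below -/
import Mathlib

section
/- Let λ be the fair-coin product probability measure on the Cantor space 2^ℕ = {0,1}^ℕ (so that each basic clopen set determined by a finite binary string s has measure 2^{−|s|}). Then there exists a map Φ from the λ-measurable subsets of 2^ℕ to 𝒫(ℕ) such that: (i) for every λ-measurable A, the asymptotic density of Φ(A) exists and d(Φ(A)) = λ(A); (ii) Φ(A ∩ B) Δ (Φ(A) ∩ Φ(B)) and Φ(2^ℕ∖A) Δ (ℕ∖Φ(A)) have asymptotic density zero for all measurable A, B; (iii) if λ(A Δ B) > 0 then Φ(A) Δ Φ(B) has positive upper asymptotic density. Hence the Lebesgue measure algebra embeds into 𝒫(ℕ)/Δ_d by a measure-preserving embedding. -/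
/-!
The map `Φ` is built by diagonalizing along the binary digits. Lévy's upward theorem approximates
a measurable set `A` of sequences by sets `S k` that depend only on the coordinates `0, …, k`. The
set of all `n` whose digit sequence lies in `S k` is periodic with period `2 ^ (k + 1)`, and its
exact frequency is the measure of `S k`. Let the approximation used at `n` become finer as `n`
grows, but so slowly that the periods met before `n` add up to `o(n)`: then `Φ A`, the set of `n`
whose digit sequence lies in `S (log₄ n)`, has density `lim λ (S k) = λ A`. The Boolean operations
on sets of integers correspond termwise to those on approximating sequences, so `Φ (A ∩ B)` and
`Φ A ∩ Φ B`, say, differ by the set attached to a sequence that approximates `∅`.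
-/

open Filter Topology MeasureTheory
open scoped symmDiff

/-- Upper asymptotic density: `d*(A) = limsup |A ∩ {0,…,n−1}|/n`. -/
noncomputable def upperDensity (A : Set ℕ) : ℝ :=
  Filter.limsup (fun n : ℕ => ((A ∩ Set.Iio n).ncard : ℝ) / n) Filter.atTop

/-- `A` has asymptotic density `α`: `lim |A ∩ {0,…,n−1}|/n = α`. -/
def HasDensity (A : Set ℕ) (α : ℝ) : Prop :=
  Filter.Tendsto (fun n : ℕ => ((A ∩ Set.Iio n).ncard : ℝ) / n) Filter.atTop (nhds α)

section Density

theorem HasDensity.upperDensity_eq {A : Set ℕ} {α : ℝ} (h : HasDensity A α) :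
    upperDensity A = α :=
  h.limsup_eq

theorem hasDensity_iff_tendsto_average_indicator {A : Set ℕ} {α : ℝ} :
    HasDensity A α ↔
      Tendsto (fun n : ℕ => (n : ℝ)⁻¹ * ∑ m ∈ Finset.range n, A.indicator 1 m) atTop (𝓝 α) := by
  classical
  refine tendsto_congr fun n => ?_
  have h_inter : A ∩ Set.Iio n = ((Finset.range n).filter (· ∈ A) : Finset ℕ) := by
    ext m
    simp [and_comm]
  rw [h_inter, Set.ncard_coe_finset, div_eq_inv_mul]
  simp [Set.indicator_apply]

theorem norm_sum_range_diagonal_le {E : Type*} [SeminormedAddCommGroup E] {f : ℕ → ℕ → E}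
    {C : ℕ → ℝ} {K : ℕ → ℕ} (hK : Monotone K)
    (hf : ∀ k n, ‖∑ m ∈ Finset.range n, f k m‖ ≤ C k) (n : ℕ) :
    ‖∑ m ∈ Finset.range n, f (K m) m‖ ≤ 2 * ∑ k ∈ Finset.range (K n + 1), C k := by
  have hC (k : ℕ) : 0 ≤ C k := (norm_nonneg _).trans (hf k 0)
  -- Comparing with the partial sum of the row in force, the error only changes when `K` jumps.
  have h_error : ‖∑ m ∈ Finset.range n, f (K m) m - ∑ m ∈ Finset.range n, f (K n) m‖ ≤
      2 * ∑ k ∈ Finset.range (K n + 1), C k - C (K n) := by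
    induction n with
    | zero =>
      rw [Finset.sum_range_succ]
      have := Finset.sum_nonneg fun k (_ : k ∈ Finset.range (K 0)) => hC k
      have := hC (K 0)
      simp only [Finset.range_zero, Finset.sum_empty, sub_zero, norm_zero]
      linarith
    | succ n ih =>
      have h_row : ∑ m ∈ Finset.range (n + 1), f (K m) m
            - ∑ m ∈ Finset.range (n + 1), f (K (n + 1)) m =
          (∑ m ∈ Finset.range n, f (K m) m - ∑ m ∈ Finset.range n, f (K n) m) +
            (∑ m ∈ Finset.range (n + 1), f (K n) m
              - ∑ m ∈ Finset.range (n + 1), f (K (n + 1)) m) := by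
        simp only [Finset.sum_range_succ]
        abel
      rw [h_row]
      obtain h_eq | h_lt := (hK n.le_succ).eq_or_lt
      · simpa [← h_eq] using ih
      · have h_jump := norm_sub_le_of_le (hf (K n) (n + 1)) (hf (K (n + 1)) (n + 1))
        have h_sum : ∑ k ∈ Finset.range (K n + 1), C k ≤ ∑ k ∈ Finset.range (K (n + 1)), C k :=
          Finset.sum_le_sum_of_subset_of_nonneg (Finset.range_mono h_lt) fun k _ _ => hC k
        rw [Finset.sum_range_succ _ (K (n + 1))]
        linarith [norm_add_le_of_le ih h_jump]
  linarith [norm_le_norm_add_norm_sub' (∑ m ∈ Finset.range n, f (K m) m)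
    (∑ m ∈ Finset.range n, f (K n) m), hf (K n) n]

theorem hasDensity_diagonal {P : ℕ → Set ℕ} {a C : ℕ → ℝ} {α : ℝ} {K : ℕ → ℕ}
    (hP : ∀ k n, |∑ m ∈ Finset.range n, ((P k).indicator 1 m - a k)| ≤ C k)
    (ha : Tendsto a atTop (𝓝 α)) (hK : Monotone K) (hK_top : Tendsto K atTop atTop)
    (hC : Tendsto (fun n : ℕ => (n : ℝ)⁻¹ * ∑ k ∈ Finset.range (K n + 1), C k) atTop (𝓝 0)) :
    HasDensity {n | n ∈ P (K n)} α := by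
  classical
  have h_discrepancy : Tendsto (fun n : ℕ => (n : ℝ)⁻¹ *
      ∑ m ∈ Finset.range n, ((P (K m)).indicator 1 m - a (K m))) atTop (𝓝 0) := by
    refine squeeze_zero_norm (fun n => ?_) (by simpa using hC.const_mul 2)
    rw [norm_mul, Real.norm_of_nonneg (by positivity), mul_left_comm]
    gcongr
    exact norm_sum_range_diagonal_le (f := fun k m => (P k).indicator 1 m - a k) hK hP n
  rw [hasDensity_iff_tendsto_average_indicator]
  have h_sum := h_discrepancy.add (ha.comp hK_top).cesaro
  rw [zero_add] at h_sum
  refine h_sum.congr fun n => ?_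
  rw [← mul_add, ← Finset.sum_add_distrib]
  congr! 2 with m
  simp [Set.indicator_apply]

theorem periodic_sum_range {M : Type*} [AddCommMonoid M] {g : ℕ → M} {p : ℕ}
    (hg : Function.Periodic g p) (h_sum : ∑ m ∈ Finset.range p, g m = 0) :
    Function.Periodic (fun n => ∑ m ∈ Finset.range n, g m) p := by
  intro n
  simp only
  rw [add_comm n p, Finset.sum_range_add, h_sum, zero_add]
  exact Finset.sum_congr rfl fun m _ => by rw [add_comm, hg]

theorem norm_sum_range_le_of_periodic {E : Type*} [SeminormedAddCommGroup E] {g : ℕ → E} {p : ℕ}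
    {C : ℝ} (hp : 0 < p) (hg : Function.Periodic g p) (h_sum : ∑ m ∈ Finset.range p, g m = 0)
    (hC : ∀ m, ‖g m‖ ≤ C) (n : ℕ) : ‖∑ m ∈ Finset.range n, g m‖ ≤ p * C := by
  rw [← (periodic_sum_range hg h_sum).map_mod_nat n]
  calc ‖∑ m ∈ Finset.range (n % p), g m‖
      ≤ ∑ _m ∈ Finset.range (n % p), C := norm_sum_le_of_le _ fun m _ => hC m
    _ = (n % p : ℕ) * C := by simp
    _ ≤ p * C := by
      have : 0 ≤ C := (norm_nonneg _).trans (hC 0)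
      have := (Nat.mod_lt n hp).le
      gcongr

theorem tendsto_nat_log_atTop {b : ℕ} (hb : 1 < b) : Tendsto (Nat.log b) atTop atTop :=
  tendsto_atTop.2 fun k =>
    (eventually_ge_atTop (b ^ k)).mono fun _ hn => Nat.le_log_of_pow_le hb hn

theorem tendsto_inv_mul_sum_range_log_four_two_pow :
    Tendsto (fun n : ℕ => (n : ℝ)⁻¹ * ∑ k ∈ Finset.range (Nat.log 4 n + 1), (2 : ℝ) ^ (k + 1))
      atTop (𝓝 0) := by
  have h_bound : Tendsto (fun n : ℕ => 4 * (1 / 2 : ℝ) ^ Nat.log 4 n) atTop (𝓝 0) := by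
    simpa using ((tendsto_pow_atTop_nhds_zero_of_lt_one (by norm_num : (0 : ℝ) ≤ 1 / 2)
      (by norm_num)).comp (tendsto_nat_log_atTop (by norm_num))).const_mul 4
  refine squeeze_zero' (.of_forall fun n => by positivity) ?_ h_bound
  filter_upwards [eventually_ne_atTop 0] with n hn
  set k := Nat.log 4 n
  have h_sum : ∑ i ∈ Finset.range (k + 1), (2 : ℝ) ^ (i + 1) ≤ 4 * 2 ^ k := by
    simp_rw [pow_succ _, ← Finset.sum_mul]
    rw [geom_sum_eq (by norm_num)]
    linarith [pow_succ (2 : ℝ) k]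
  have h_log : (2 : ℝ) ^ k * 2 ^ k ≤ n := by
    rw [← mul_pow]
    norm_num
    exact_mod_cast Nat.pow_log_le_self 4 hn
  rw [inv_mul_le_iff₀ (by positivity), one_div, inv_pow]
  calc ∑ i ∈ Finset.range (k + 1), (2 : ℝ) ^ (i + 1)
      ≤ 4 * 2 ^ k := h_sum
    _ = 2 ^ k * 2 ^ k * (4 * (2 ^ k)⁻¹) := by field_simp
    _ ≤ n * (4 * (2 ^ k)⁻¹) := by gcongr

end Density

section AdaptedApproximation

variable {Ω : Type*} {m0 : MeasurableSpace Ω} {ℱ : Filtration ℕ m0} {μ : Measure Ω}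
  {S T : ℕ → Set Ω} {A B : Set Ω}

theorem tendsto_measureReal_zero_of_subset_union [IsFiniteMeasure μ]
    {U V W : ℕ → Set Ω} (hUVW : ∀ n, U n ⊆ V n ∪ W n)
    (hV : Tendsto (fun n => μ.real (V n)) atTop (𝓝 0))
    (hW : Tendsto (fun n => μ.real (W n)) atTop (𝓝 0)) :
    Tendsto (fun n => μ.real (U n)) atTop (𝓝 0) :=
  squeeze_zero (fun _ => measureReal_nonneg)
    (fun n => (measureReal_mono (hUVW n)).trans (measureReal_union_le _ _))
    (by simpa using hV.add hW)

/-- The sequence of sets `S` is adapted to the filtration `ℱ` and converges to `A` in the measure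
algebra of `μ`. The set `A` itself is not required to be measurable. -/
structure IsAdaptedApprox (ℱ : Filtration ℕ m0) (μ : Measure Ω) (S : ℕ → Set Ω) (A : Set Ω) :
    Prop where
  measurableSet : ∀ n, MeasurableSet[ℱ n] (S n)
  tendsto_symmDiff : Tendsto (fun n => μ.real (A ∆ S n)) atTop (𝓝 0)

namespace IsAdaptedApprox

theorem compl (hS : IsAdaptedApprox ℱ μ S A) : IsAdaptedApprox ℱ μ (fun n => (S n)ᶜ) Aᶜ where
  measurableSet n := (hS.measurableSet n).compl
  tendsto_symmDiff := by simpa only [compl_symmDiff_compl] using hS.tendsto_symmDiff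

variable [IsFiniteMeasure μ]

theorem inter (hS : IsAdaptedApprox ℱ μ S A) (hT : IsAdaptedApprox ℱ μ T B) :
    IsAdaptedApprox ℱ μ (fun n => S n ∩ T n) (A ∩ B) where
  measurableSet n := (hS.measurableSet n).inter (hT.measurableSet n)
  tendsto_symmDiff := by
    refine tendsto_measureReal_zero_of_subset_union (fun n => ?_) hS.tendsto_symmDiff
      hT.tendsto_symmDiff
    rw [← compl_symmDiff_compl, Set.compl_inter, Set.compl_inter,
      ← compl_symmDiff_compl (a := A), ← compl_symmDiff_compl (a := B)]
    exact Set.union_symmDiff_union_subset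

theorem symmDiff (hS : IsAdaptedApprox ℱ μ S A) (hT : IsAdaptedApprox ℱ μ T B) :
    IsAdaptedApprox ℱ μ (fun n => S n ∆ T n) (A ∆ B) where
  measurableSet n := (hS.measurableSet n).symmDiff (hT.measurableSet n)
  tendsto_symmDiff := by
    refine tendsto_measureReal_zero_of_subset_union (fun n => ?_) hS.tendsto_symmDiff
      hT.tendsto_symmDiff
    rw [symmDiff_symmDiff_symmDiff_comm]
    exact Set.symmDiff_subset_union

theorem tendsto_measureReal (hS : IsAdaptedApprox ℱ μ S A) :
    Tendsto (fun n => μ.real (S n)) atTop (𝓝 (μ.real A)) := by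
  rw [tendsto_iff_norm_sub_tendsto_zero]
  refine squeeze_zero (fun _ => norm_nonneg _) (fun n => ?_) hS.tendsto_symmDiff
  have h_left : μ.real A ≤ μ.real (A ∆ S n) + μ.real (S n) := by
    simpa [← Set.bot_eq_empty] using measureReal_symmDiff_le (μ := μ) (s := A) (t := S n) ∅
  have h_right : μ.real (S n) ≤ μ.real (A ∆ S n) + μ.real A := by
    simpa [← Set.bot_eq_empty, symmDiff_comm (S n) A] using
      measureReal_symmDiff_le (μ := μ) (s := S n) (t := A) ∅
  rw [Real.norm_eq_abs, abs_sub_le_iff]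
  constructor <;> linarith

end IsAdaptedApprox

theorem exists_isAdaptedApprox_of_measurableSet [IsFiniteMeasure μ]
    (hA : MeasurableSet[⨆ n, ℱ n] A) : ∃ S, IsAdaptedApprox ℱ μ S A := by
  classical
  let f : Ω → ℝ := A.indicator 1
  have hf : StronglyMeasurable[⨆ n, ℱ n] f := stronglyMeasurable_one.indicator hA
  have hf_int : Integrable f μ :=
    (integrable_const 1).indicator (iSup_le ℱ.le A hA)
  have h_condExp : TendstoInMeasure μ (fun n => μ[f | ℱ n]) atTop f :=
    tendstoInMeasure_of_tendsto_eLpNorm one_ne_zero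
      (fun n => (stronglyMeasurable_condExp.mono (ℱ.le n)).aestronglyMeasurable)
      hf_int.aestronglyMeasurable (hf_int.tendsto_eLpNorm_condExp hf)
  refine ⟨fun n => {x | 1 / 2 ≤ (μ[f | ℱ n]) x},
    fun n => stronglyMeasurable_condExp.measurable measurableSet_Ici, ?_⟩
  -- On the symmetric difference, `f` takes the value `0` or `1` on the other side of the threshold
  -- `1 / 2`, hence at distance at least `1 / 2` from its conditional expectation.
  refine squeeze_zero (fun _ => measureReal_nonneg) (fun n => measureReal_mono ?_)
    (tendstoInMeasure_iff_measureReal_norm.1 h_condExp (1 / 2) (by norm_num))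
  rintro x (⟨hxA, hx⟩ | ⟨hx, hxA⟩)
  all_goals
    simp only [Set.mem_ofPred_eq, not_le] at hx
    simp only [f, Set.mem_ofPred_eq, Set.indicator_apply, hxA, if_true, if_false, Pi.one_apply,
      Real.norm_eq_abs, le_abs]
    grind

theorem exists_isAdaptedApprox [IsFiniteMeasure μ] (hℱ : ⨆ n, ℱ n = m0)
    (hA : NullMeasurableSet A μ) : ∃ S, IsAdaptedApprox ℱ μ S A := by
  obtain ⟨B, hB, hAB⟩ := hA
  obtain ⟨S, hS⟩ := exists_isAdaptedApprox_of_measurableSet (ℱ := ℱ) (μ := μ) (hℱ.symm ▸ hB)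
  refine ⟨S, hS.measurableSet, hS.tendsto_symmDiff.congr fun n => ?_⟩
  exact measureReal_congr (ae_eq_set_symmDiff hAB.symm EventuallyEq.rfl)

end AdaptedApproximation

section PiFiltration

variable {ι : Type*} [Preorder ι] {X : ι → Type*} [∀ i, MeasurableSpace (X i)]

theorem iSup_piLE : ⨆ i, Filtration.piLE (X := X) i = MeasurableSpace.pi := by
  refine le_antisymm (iSup_le Filtration.piLE.le) (iSup_mono fun i => ?_)
  rw [← measurable_iff_comap_le]
  exact (measurable_pi_apply (X := fun j : Set.Iic i => X j) ⟨i, le_rfl⟩).comp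
    (comap_measurable _)

theorem mem_congr_of_measurableSet_piLE {i : ι} {S : Set (∀ i, X i)}
    (hS : MeasurableSet[Filtration.piLE i] S) {x y : ∀ i, X i} (hxy : ∀ j ≤ i, x j = y j) :
    x ∈ S ↔ y ∈ S := by
  have h_mem : Measurable[Filtration.piLE i] (· ∈ S) :=
    (@measurable_mem _ S (Filtration.piLE i)).2 hS
  exact iff_of_eq (h_mem.dependsOn_of_piLE hxy)

end PiFiltration

section FairCoin

/-- The fair-coin product measure on the Cantor space, characterized by its values on cylinders. -/
def IsFairCoin (lam : Measure (ℕ → Bool)) : Prop :=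
  ∀ (s : Finset ℕ) (f : ℕ → Bool),
    lam {x : ℕ → Bool | ∀ i ∈ s, x i = f i} = (2 : ENNReal)⁻¹ ^ s.card

/-- The integer whose binary digits are the first `k` terms of `x`, lowest digit first. It is used
to index the cylinders on the first `k` coordinates by `0, …, 2 ^ k - 1`. -/
def prefixNat (k : ℕ) (x : ℕ → Bool) : ℕ :=
  Nat.ofBits fun j : Fin k => x j

/-- The set of integers `n` whose sequence of binary digits lies in the set `S (log₄ n)`; it is the
set of integers encoding the limit of `S`. The schedule `log₄ n` is slow enough for the period
`2 ^ (k + 1)` of the digits `0, …, k` to be negligible against the least `n` with `log₄ n = k`. -/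
def digitDiagonal (S : ℕ → Set (ℕ → Bool)) : Set ℕ :=
  {n | n.testBit ∈ S (Nat.log 4 n)}

theorem digitDiagonal_compl (S : ℕ → Set (ℕ → Bool)) :
    digitDiagonal (fun k => (S k)ᶜ) = (digitDiagonal S)ᶜ :=
  rfl

theorem digitDiagonal_inter (S T : ℕ → Set (ℕ → Bool)) :
    digitDiagonal (fun k => S k ∩ T k) = digitDiagonal S ∩ digitDiagonal T :=
  rfl

theorem digitDiagonal_symmDiff (S T : ℕ → Set (ℕ → Bool)) :
    digitDiagonal (fun k => S k ∆ T k) = digitDiagonal S ∆ digitDiagonal T :=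
  rfl

variable {lam : Measure (ℕ → Bool)} {k : ℕ} {S : Set (ℕ → Bool)}

theorem testBit_prefixNat {j : ℕ} (hj : j < k) (x : ℕ → Bool) :
    (prefixNat k x).testBit j = x j :=
  Nat.testBit_ofBits_lt _ j hj

theorem prefixNat_lt_two_pow (k : ℕ) (x : ℕ → Bool) : prefixNat k x < 2 ^ k :=
  Nat.ofBits_lt_two_pow _

theorem prefixNat_eq_iff {i : ℕ} (hi : i < 2 ^ k) {x : ℕ → Bool} :
    prefixNat k x = i ↔ ∀ j ∈ Finset.range k, x j = i.testBit j := by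
  constructor
  · rintro rfl j hj
    exact (testBit_prefixNat (Finset.mem_range.1 hj) x).symm
  · refine fun h => Nat.eq_of_testBit_eq fun j => ?_
    obtain hj | hj := lt_or_ge j k
    · rw [testBit_prefixNat hj, h j (Finset.mem_range.2 hj)]
    · have h_pow := Nat.pow_le_pow_right two_pos hj
      rw [Nat.testBit_lt_two_pow ((prefixNat_lt_two_pow k x).trans_le h_pow),
        Nat.testBit_lt_two_pow (hi.trans_le h_pow)]

theorem measurable_prefixNat (k : ℕ) : Measurable (prefixNat k) :=
  (Measurable.of_discrete (f := Nat.ofBits)).comp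
    (measurable_pi_lambda _ fun j => measurable_pi_apply (j : ℕ))

theorem IsFairCoin.measureReal_prefixNat_preimage (hlam : IsFairCoin lam) {i : ℕ}
    (hi : i < 2 ^ k) : lam.real (prefixNat k ⁻¹' {i}) = (2 ^ k)⁻¹ := by
  have h_fiber : prefixNat k ⁻¹' {i} = {x | ∀ j ∈ Finset.range k, x j = i.testBit j} :=
    Set.ext fun _ => prefixNat_eq_iff hi
  rw [h_fiber, measureReal_def, hlam]
  simp

theorem periodic_testBit_mem (hS : MeasurableSet[Filtration.piLE k] S) :
    Function.Periodic (fun n : ℕ => n.testBit ∈ S) (2 ^ (k + 1)) := fun n =>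
  propext <| mem_congr_of_measurableSet_piLE hS fun j hj => by
    rw [add_comm, Nat.testBit_two_pow_add_gt (Nat.lt_succ_of_le hj)]

theorem IsFairCoin.sum_indicator_testBit_mem [IsFiniteMeasure lam] (hlam : IsFairCoin lam)
    (hS : MeasurableSet[Filtration.piLE k] S) :
    ∑ i ∈ Finset.range (2 ^ (k + 1)), {n : ℕ | n.testBit ∈ S}.indicator 1 i =
      2 ^ (k + 1) * lam.real S := by
  classical
  let codes : Finset ℕ := {i ∈ Finset.range (2 ^ (k + 1)) | i.testBit ∈ S}
  have hS_eq : S = prefixNat (k + 1) ⁻¹' codes := by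
    ext x
    have h_digits : (prefixNat (k + 1) x).testBit ∈ S ↔ x ∈ S :=
      mem_congr_of_measurableSet_piLE hS fun j hj => testBit_prefixNat (Nat.lt_succ_of_le hj) x
    simp [codes, h_digits, prefixNat_lt_two_pow]
  have h_measure : lam.real S = codes.card * (2 ^ (k + 1))⁻¹ := by
    rw [hS_eq, ← sum_measureReal_preimage_singleton _ fun i _ =>
      measurable_prefixNat _ (measurableSet_singleton i), ← nsmul_eq_mul]
    exact Finset.sum_eq_card_nsmul fun i hi => hlam.measureReal_prefixNat_preimage
      (Finset.mem_range.1 (Finset.mem_filter.1 hi).1)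
  rw [h_measure, mul_left_comm, mul_inv_cancel₀ (by positivity), mul_one]
  simp [Set.indicator_apply, codes]

theorem IsFairCoin.abs_sum_indicator_testBit_mem_sub_le [IsProbabilityMeasure lam]
    (hlam : IsFairCoin lam) (hS : MeasurableSet[Filtration.piLE k] S) (n : ℕ) :
    |∑ m ∈ Finset.range n, ({n : ℕ | n.testBit ∈ S}.indicator 1 m - lam.real S)| ≤
      2 ^ (k + 1) := by
  classical
  have h_le_one (m : ℕ) : ‖{n : ℕ | n.testBit ∈ S}.indicator 1 m - lam.real S‖ ≤ 1 := by
    have h0 : 0 ≤ lam.real S := measureReal_nonneg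
    have h1 : lam.real S ≤ 1 := measureReal_le_one
    rw [Set.indicator_apply, Pi.one_apply, Real.norm_eq_abs, abs_le]
    split_ifs <;> constructor <;> linarith
  have h_periodic : Function.Periodic
      (fun m => {n : ℕ | n.testBit ∈ S}.indicator (1 : ℕ → ℝ) m - lam.real S)
      (2 ^ (k + 1)) := fun m => by
    have h_mem : (m + 2 ^ (k + 1)).testBit ∈ S ↔ m.testBit ∈ S :=
      iff_of_eq (periodic_testBit_mem hS m)
    simp [Set.indicator_apply, h_mem]
  have h_sum : ∑ m ∈ Finset.range (2 ^ (k + 1)),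
      ({n : ℕ | n.testBit ∈ S}.indicator 1 m - lam.real S) = 0 := by
    rw [Finset.sum_sub_distrib, hlam.sum_indicator_testBit_mem hS]
    simp
  simpa using norm_sum_range_le_of_periodic (by positivity) h_periodic h_sum h_le_one n

theorem IsFairCoin.hasDensity_digitDiagonal [IsProbabilityMeasure lam] (hlam : IsFairCoin lam)
    {S : ℕ → Set (ℕ → Bool)} {A : Set (ℕ → Bool)}
    (hS : IsAdaptedApprox Filtration.piLE lam S A) :
    HasDensity (digitDiagonal S) (lam.real A) :=
  hasDensity_diagonal (P := fun k => {n : ℕ | n.testBit ∈ S k})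
    (fun k n => hlam.abs_sum_indicator_testBit_mem_sub_le (hS.measurableSet k) n)
    hS.tendsto_measureReal Nat.log_monotone (tendsto_nat_log_atTop (by norm_num))
    tendsto_inv_mul_sum_range_log_four_two_pow

end FairCoin

/-- The result of \cite{F}: the measure algebra of the fair-coin product measure `λ` on the
Cantor space `2^ℕ` (equivalently, the Lebesgue measure algebra `LM/Δ`) admits a
measure-preserving embedding into `𝒫(ℕ)/Δ_d`.  Here `lam` is a probability measure giving
each basic cylinder `{x : ∀ i ∈ s, x i = f i}` (determined by a finite binary string on a
finite set `s` of coordinates) measure `2^{-|s|}`, i.e. the fair-coin product measure. -/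
theorem lebesgue_algebra_embeds_into_density_quotient
    (lam : Measure (ℕ → Bool)) [IsProbabilityMeasure lam]
    (hcyl : ∀ (s : Finset ℕ) (f : ℕ → Bool),
      lam {x : ℕ → Bool | ∀ i ∈ s, x i = f i} = (2 : ENNReal)⁻¹ ^ s.card) :
    ∃ Φ : Set (ℕ → Bool) → Set ℕ,
      -- (i) measure-preserving: the density of `Φ A` exists and equals `lam A`
      (∀ A : Set (ℕ → Bool), NullMeasurableSet A lam → HasDensity (Φ A) (lam A).toReal) ∧
      -- (ii) Boolean homomorphism modulo `Δ_d`
      (∀ A B : Set (ℕ → Bool), NullMeasurableSet A lam → NullMeasurableSet B lam →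
        HasDensity (Φ (A ∩ B) ∆ (Φ A ∩ Φ B)) 0) ∧
      (∀ A : Set (ℕ → Bool), NullMeasurableSet A lam →
        HasDensity (Φ Aᶜ ∆ (Φ A)ᶜ) 0) ∧
      -- (iii) injective modulo `Δ_d`
      (∀ A B : Set (ℕ → Bool), NullMeasurableSet A lam → NullMeasurableSet B lam →
        0 < lam (A ∆ B) → 0 < upperDensity (Φ A ∆ Φ B)) := by
  choose! F hF using fun A hA =>
    exists_isAdaptedApprox (ℱ := Filtration.piLE) (μ := lam) (A := A) iSup_piLE hA
  have h_density {S : ℕ → Set (ℕ → Bool)} {A : Set (ℕ → Bool)}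
      (hS : IsAdaptedApprox Filtration.piLE lam S A) : HasDensity (digitDiagonal S) (lam.real A) :=
    IsFairCoin.hasDensity_digitDiagonal hcyl hS
  refine ⟨fun A => digitDiagonal (F A), fun A hA => h_density (hF A hA), fun A B hA hB => ?_,
    fun A hA => ?_, fun A B hA hB hAB => ?_⟩
  · simpa [digitDiagonal_symmDiff, digitDiagonal_inter] using h_density
      ((hF (A ∩ B) (hA.inter hB)).symmDiff ((hF A hA).inter (hF B hB)))
  · simpa [digitDiagonal_symmDiff, digitDiagonal_compl] using
      h_density ((hF Aᶜ hA.compl).symmDiff (hF A hA).compl)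
  · have h_symmDiff := h_density ((hF A hA).symmDiff (hF B hB))
    exact h_symmDiff.upperDensity_eq.symm ▸ ENNReal.toReal_pos hAB.ne' (measure_ne_top _ _)
end

section
/- Let A ⊆ ℕ be an infinite set with asymptotic density d(A) = c > 0, and let e : ℕ → A be the strictly increasing enumeration of A. Then for every S ⊆ ℕ, the upper asymptotic density of the image satisfies d*(e(S)) = c · d*(S); in particular, e(S) has asymptotic density zero if and only if S has asymptotic density zero. -/
open Filter Topology MeasureTheory
open scoped symmDiff

/-!
Let `e` enumerate `A` and let `k n = |A ∩ {0,…,n−1}|`. Since `e m < n ↔ m < k n`, the elements of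
`e(S)` below `n` are the images of the elements of `S` below `k n`, so the proportion of `e(S)`
below `n` is the proportion of `S` below `k n` times the proportion of `A` below `n`. The second
factor tends to `c`. As `n` grows, `k` runs monotonically through all of `ℕ`, so the first factor
has the same limsup and the same limits as the proportion of `S` below `n`.
-/

/-- The proportion `|A ∩ {0,…,n−1}|/n` of elements of `A` below `n`, whose limsup and limit are the
upper asymptotic density and the asymptotic density of `A`; it is `0` at `n = 0`. -/
noncomputable def partialDensity (A : Set ℕ) (n : ℕ) : ℝ :=
  ((A ∩ Set.Iio n).ncard : ℝ) / n

theorem upperDensity_eq_limsup_partialDensity (A : Set ℕ) :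
    upperDensity A = limsup (partialDensity A) atTop :=
  rfl

theorem hasDensity_iff_tendsto_partialDensity {A : Set ℕ} {α : ℝ} :
    HasDensity A α ↔ Tendsto (partialDensity A) atTop (𝓝 α) :=
  Iff.rfl

theorem partialDensity_nonneg (A : Set ℕ) (n : ℕ) : 0 ≤ partialDensity A n := by
  unfold partialDensity
  positivity

theorem partialDensity_le_one (A : Set ℕ) (n : ℕ) : partialDensity A n ≤ 1 := by
  have hcard : (A ∩ Set.Iio n).ncard ≤ n :=
    (Set.ncard_inter_le_ncard_right A (Set.Iio n)).trans_eq (Set.ncard_Iio_nat n)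
  exact div_le_one_of_le₀ (mod_cast hcard) n.cast_nonneg

theorem limsup_mul_of_tendsto {ι : Type*} {l : Filter ι} [l.NeBot] {u v : ι → ℝ} {c : ℝ}
    (hu : ∃ᶠ i in l, 0 ≤ u i) (hu' : IsBoundedUnder (· ≤ ·) l u)
    (hv : 0 ≤ᶠ[l] v) (hvc : Tendsto v l (𝓝 c)) :
    limsup (u * v) l = limsup u l * c := by
  apply le_antisymm
  · simpa only [hvc.limsup_eq] using limsup_mul_le hu hu' hv hvc.isBoundedUnder_le
  · simpa only [hvc.liminf_eq] using le_limsup_mul hu hu' hv hvc.isBoundedUnder_le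

section Enumeration

variable {A : Set ℕ}

section Count

variable [DecidablePred (· ∈ A)]

theorem ncard_inter_Iio_eq_count (n : ℕ) : (A ∩ Set.Iio n).ncard = Nat.count (· ∈ A) n := by
  rw [Nat.count_eq_card_filter_range, ← Set.ncard_coe_finset]
  congr 1
  ext x
  simp [and_comm]

theorem map_count_atTop (hA : A.Infinite) : map (Nat.count (· ∈ A)) atTop = atTop :=
  map_atTop_eq_of_gc (Nat.nth (· ∈ A)) 0 (Nat.count_monotone _)
    (fun n m _ => Nat.gc_count_nth (p := (· ∈ A)) hA n m)
    (fun m _ => (Nat.count_nth_of_infinite (p := (· ∈ A)) hA m).ge)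

theorem image_nth_inter_Iio (hA : A.Infinite) (S : Set ℕ) (n : ℕ) :
    Nat.nth (· ∈ A) '' S ∩ Set.Iio n =
      Nat.nth (· ∈ A) '' (S ∩ Set.Iio (Nat.count (· ∈ A) n)) := by
  have hpre : Nat.nth (· ∈ A) ⁻¹' Set.Iio n = Set.Iio (Nat.count (· ∈ A) n) :=
    Set.ext fun _ => (Nat.lt_nth_iff_count_lt (p := (· ∈ A)) hA).symm
  rw [← Set.image_inter_preimage, hpre]

theorem partialDensity_image_nth (hA : A.Infinite) (S : Set ℕ) :
    partialDensity (Nat.nth (· ∈ A) '' S) =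
      (partialDensity S ∘ Nat.count (· ∈ A)) * partialDensity A := by
  funext n
  simp only [partialDensity, Pi.mul_apply, Function.comp_apply, image_nth_inter_Iio hA,
    Set.ncard_image_of_injective _ (Nat.nth_injective (p := (· ∈ A)) hA),
    ncard_inter_Iio_eq_count (A := A)]
  -- When no element of `A` lies below `n`, both sides are `0`, the right one because `x / 0 = 0`.
  rcases eq_or_ne (Nat.count (· ∈ A) n) 0 with hcount | hcount
  · simp [hcount]
  · field_simp

end Count

theorem HasDensity.upperDensity_image_nth {c : ℝ} (hd : HasDensity A c) (hA : A.Infinite)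
    (S : Set ℕ) : upperDensity (Nat.nth (· ∈ A) '' S) = c * upperDensity S := by
  classical
  calc upperDensity (Nat.nth (· ∈ A) '' S)
      = limsup ((partialDensity S ∘ Nat.count (· ∈ A)) * partialDensity A) atTop := by
        rw [upperDensity_eq_limsup_partialDensity, partialDensity_image_nth hA]
    _ = limsup (partialDensity S ∘ Nat.count (· ∈ A)) atTop * c :=
        limsup_mul_of_tendsto (.of_forall fun _ => partialDensity_nonneg S _)
          (isBoundedUnder_of ⟨1, fun _ => partialDensity_le_one S _⟩)
          (.of_forall (partialDensity_nonneg A)) hd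
    _ = upperDensity S * c := by
        rw [limsup_comp, map_count_atTop hA, upperDensity_eq_limsup_partialDensity]
    _ = c * upperDensity S := mul_comm _ _

theorem HasDensity.hasDensity_image_nth_iff {c : ℝ} (hd : HasDensity A c) (hA : A.Infinite)
    (hc : c ≠ 0) {S : Set ℕ} {δ : ℝ} :
    HasDensity (Nat.nth (· ∈ A) '' S) (δ * c) ↔ HasDensity S δ := by
  classical
  calc HasDensity (Nat.nth (· ∈ A) '' S) (δ * c)
      ↔ Tendsto ((partialDensity S ∘ Nat.count (· ∈ A)) * partialDensity A) atTop
          (𝓝 (δ * c)) := by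
        rw [hasDensity_iff_tendsto_partialDensity, partialDensity_image_nth hA]
    _ ↔ Tendsto (partialDensity S ∘ Nat.count (· ∈ A)) atTop (𝓝 δ) :=
        tendsto_mul_iff_of_ne_zero hd hc
    _ ↔ HasDensity S δ := by
        rw [← tendsto_map'_iff, map_count_atTop hA, hasDensity_iff_tendsto_partialDensity]

end Enumeration

/-- If `A ⊆ ℕ` has positive density `c` and `e` is its strictly increasing enumeration,
then for every `S ⊆ ℕ` the image `e '' S` has upper density `c · d*(S)`; in particular
`e '' S` has density zero iff `S` has density zero. -/
theorem upperDensity_image_enumeration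
    (A : Set ℕ) (hA : A.Infinite) (c : ℝ) (hc : 0 < c) (hd : HasDensity A c)
    (e : ℕ → ℕ) (he : e = Nat.nth (· ∈ A)) :
    ∀ S : Set ℕ,
      upperDensity (e '' S) = c * upperDensity S ∧
      (HasDensity (e '' S) 0 ↔ HasDensity S 0) := by
  subst he
  intro S
  refine ⟨hd.upperDensity_image_nth hA S, ?_⟩
  simpa only [zero_mul] using hd.hasDensity_image_nth_iff hA hc.ne' (S := S) (δ := 0)
end
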